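/- arXiv:1207.4819 — 3 statements merged into one kernel-verified Lean document; each statement's English description precedes it below -/
import Mathlib

section
/- Lower bound on the regularized coherence function: For every S ∈ 𝒮_V with r := rank(S) ≥ 1 and every λ ≥ λ₁ (λ > 0), the regularized coherence function satisfies φ̄(S;λ) ≥ (r/m)·F̄(λ) ≥ (r/m)·F(λ). -/
open MeasureTheory Finset
open scoped ENNReal NNReal

noncomputable section

/-- Sample space for one observation: a pair of vertices `(X, X')` and a response `Y`. -/
abbrev Obs (m : ℕ) := Fin m × Fin m × ℝ

/-- Squared Hilbert–Schmidt (Frobenius) norm of a kernel. -/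
def hsNormSq {m : ℕ} (S : Matrix (Fin m) (Fin m) ℝ) : ℝ := ∑ u, ∑ v, (S u v) ^ 2

/-- Squared `L₂(Π²)` norm: `‖S‖²_{L₂(Π²)} = m⁻² ‖S‖₂²`. -/
def l2PiSq {m : ℕ} (S : Matrix (Fin m) (Fin m) ℝ) : ℝ := hsNormSq S / (m : ℝ) ^ 2

/-- Squared Sobolev (Hilbert–Schmidt) norm `‖W^{1/2}S‖₂² = ∑ₖ λₖ ‖S φₖ‖²`,
expressed through the eigendata `(lam, φ)` of `W` (indexed by `1,…,m`). -/
def sobolevHSSq {m : ℕ} (lam : ℕ → ℝ) (φ : ℕ → Fin m → ℝ)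
    (S : Matrix (Fin m) (Fin m) ℝ) : ℝ :=
  ∑ k ∈ Finset.Icc 1 m, lam k * ∑ u, (S.mulVec (φ k) u) ^ 2

/-- `φ₁,…,φ_m` are orthonormal in `ℝ^V` (Euclidean inner product). -/
def OrthonormalFamily (m : ℕ) (φ : ℕ → Fin m → ℝ) : Prop :=
  ∀ j ∈ Finset.Icc 1 m, ∀ k ∈ Finset.Icc 1 m,
    (∑ v, φ j v * φ k v) = if j = k then (1 : ℝ) else 0

/-- Eigendata of the positive semidefinite kernel `W`: orthonormal eigenfunctions `φ`,
nonnegative nondecreasing eigenvalues `lam` (indexed by `1,…,m`), `k0` the smallest index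
of a positive eigenvalue, and `λ_{k+1} ≤ c·λ_k` for `k ≥ k0`. -/
structure IsEigenData (m : ℕ) (c : ℝ) (lam : ℕ → ℝ) (φ : ℕ → Fin m → ℝ) (k0 : ℕ) : Prop where
  orth : OrthonormalFamily m φ
  nonneg : ∀ k ∈ Finset.Icc 1 m, 0 ≤ lam k
  mono : ∀ k l : ℕ, 1 ≤ k → k ≤ l → l ≤ m → lam k ≤ lam l
  k0_mem : 1 ≤ k0 ∧ k0 ≤ m ∧ 0 < lam k0
  k0_min : ∀ k ∈ Finset.Icc 1 m, 0 < lam k → k0 ≤ k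
  ratio : ∀ k : ℕ, k0 ≤ k → k + 1 ≤ m → lam (k + 1) ≤ c * lam k

/-- The design `(X, X')` is uniformly distributed on `V × V`. -/
def UniformDesign (m : ℕ) (P : Measure (Obs m)) : Prop :=
  ∀ u v : Fin m, P {z : Obs m | z.1 = u ∧ z.2.1 = v} = ((m : ℝ≥0∞) ^ 2)⁻¹

/-- The regression kernel `S_P(u,v) = m²·E_P[Y·1{X=u, X'=v}] = E_P(Y | X=u, X'=v)`. -/
def regKernel (m : ℕ) (P : Measure (Obs m)) : Matrix (Fin m) (Fin m) ℝ :=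
  Matrix.of fun u v =>
    (m : ℝ) ^ 2 * ∫ z : Obs m, (if z.1 = u ∧ z.2.1 = v then z.2.2 else 0) ∂P

/-- Membership in the class `𝒫_{r,ρ,a}` of sampling distributions. -/
def MemP (m : ℕ) (r : ℕ) (ρ a : ℝ) (lam : ℕ → ℝ) (φ : ℕ → Fin m → ℝ)
    (P : Measure (Obs m)) : Prop :=
  IsProbabilityMeasure P ∧ UniformDesign m P ∧ (∀ᵐ z ∂P, |z.2.2| ≤ a) ∧
    (regKernel m P).IsSymm ∧ (regKernel m P).rank ≤ r ∧
    sobolevHSSq lam φ (regKernel m P) ≤ ρ ^ 2 * (m : ℝ) ^ 2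


/-- Squared norm of the orthogonal projection of `x` onto the support (= range, for a
symmetric matrix) of `S`. -/
def projSuppNormSq {m : ℕ} (S : Matrix (Fin m) (Fin m) ℝ) (x : Fin m → ℝ) : ℝ :=
  ‖(Submodule.orthogonalProjectionOnto (LinearMap.range (Matrix.toEuclideanLin S))
      ((EuclideanSpace.equiv (Fin m) ℝ).symm x) : EuclideanSpace ℝ (Fin m))‖ ^ 2

/-- The coherence function `φ(S;t) := ∑_{λ_j ≤ t} ‖P_L φ_j‖²`, `L = supp(S)`. -/
def cohFn {m : ℕ} (lam : ℕ → ℝ) (φ : ℕ → Fin m → ℝ) (S : Matrix (Fin m) (Fin m) ℝ)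
    (t : ℝ) : ℝ :=
  ∑ j ∈ (Finset.Icc 1 m).filter fun j => lam j ≤ t, projSuppNormSq S (φ j)

/-- The regularized coherence function
`φ̄(S;t) := sup_{0 < σ ≤ t} F̄(σ)·sup_{σ' ≥ σ} φ(S;σ')/F̄(σ')`. -/
def cohBar {m : ℕ} (lam : ℕ → ℝ) (φ : ℕ → Fin m → ℝ) (Fbar : ℝ → ℝ)
    (S : Matrix (Fin m) (Fin m) ℝ) (t : ℝ) : ℝ :=
  sSup ((fun σ => Fbar σ *
      sSup ((fun σ' => cohFn lam φ S σ' / Fbar σ') '' Set.Ici σ)) '' Set.Ioc 0 t)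

/-- `φ̄(S; ε̄⁻¹)`, with the convention `φ̄(S; +∞) := rank S` when `ε̄ = 0`. -/
def cohBarInv {m : ℕ} (lam : ℕ → ℝ) (φ : ℕ → Fin m → ℝ) (Fbar : ℝ → ℝ)
    (S : Matrix (Fin m) (Fin m) ℝ) (ebar : ℝ) : ℝ :=
  if ebar = 0 then (S.rank : ℝ) else cohBar lam φ Fbar S ebar⁻¹

/-- The nuclear norm of a symmetric matrix: the sum of absolute values of its
eigenvalues. -/
def nuclearNorm {m : ℕ} (S : Matrix (Fin m) (Fin m) ℝ) : ℝ :=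
  if h : S.IsHermitian then ∑ i, |h.eigenvalues i| else 0

/-- The spectral function `F(t) := #{j : λ_j ≤ t}`. -/
def specFn (m : ℕ) (lam : ℕ → ℝ) (t : ℝ) : ℕ :=
  ((Finset.Icc 1 m).filter fun j => lam j ≤ t).card

/-- `F̄` is a regularized majorant of the spectral function `F`: nondecreasing,
`F ≤ F̄`, `t ↦ F̄(t)/t` nonincreasing, `∫_t^∞ F̄(s)s⁻² ds ≤ γ⁻¹ F̄(t)/t`, and
`F̄(t) = m` for `t ≥ λ_m`. -/
structure IsSpectralMajorant (m : ℕ) (γ : ℝ) (lam : ℕ → ℝ) (Fbar : ℝ → ℝ) : Prop where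
  pos : ∀ t : ℝ, 0 < t → 0 < Fbar t
  mono : ∀ s t : ℝ, 0 < s → s ≤ t → Fbar s ≤ Fbar t
  majorant : ∀ t : ℝ, 0 < t → (specFn m lam t : ℝ) ≤ Fbar t
  ratio_anti : ∀ s t : ℝ, 0 < s → s ≤ t → Fbar t / t ≤ Fbar s / s
  integral : ∀ t : ℝ, 0 < t → (∫ s in Set.Ioi t, Fbar s / s ^ 2) ≤ γ⁻¹ * Fbar t / t
  top : ∀ t : ℝ, lam m ≤ t → Fbar t = m

/-- The quantity `t_{n,m} = t + 3 log(2 log₂ n + ½ log₂(λ_m/λ̃) + 2)`. -/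
def tnm (n m : ℕ) (t lamTilde : ℝ) (lam : ℕ → ℝ) : ℝ :=
  t + 3 * Real.log (2 * Real.logb 2 n + (1 / 2) * Real.logb 2 (lam m / lamTilde) + 2)

/-!
Since `P_L φ_j` has norm at most one, `φ(S; ·) ≤ F ≤ F̄`, so the suprema defining `φ̄` are over
bounded sets (of ratios at most `1` and of products at most `F̄(λ)`) and are bounded below by each
of their members. The member with `σ = λ` and `σ' = max λ λ_m` gives the bound: there `F̄(σ') = m`,
and `φ(S; σ') = ∑_j ‖P_L φ_j‖² = tr P_L = r`.
-/

section Projection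

variable {𝕜 E ι : Type*} [RCLike 𝕜] [NormedAddCommGroup E] [InnerProductSpace 𝕜 E]

theorem trace_starProjection_eq_finrank [FiniteDimensional 𝕜 E] (L : Submodule 𝕜 E) :
    LinearMap.trace 𝕜 E L.starProjection = Module.finrank 𝕜 L :=
  LinearMap.IsProj.trace
    ⟨L.starProjection_apply_mem, fun _ => Submodule.starProjection_eq_self_iff.2⟩

theorem sum_norm_sq_starProjection_eq_finrank [Fintype ι] (b : OrthonormalBasis ι 𝕜 E)
    (L : Submodule 𝕜 E) [L.HasOrthogonalProjection] :
    ∑ i, ‖L.starProjection (b i)‖ ^ 2 = (Module.finrank 𝕜 L : ℝ) := by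
  have : FiniteDimensional 𝕜 E := b.toBasis.finiteDimensional_of_finite
  have trace_eq := LinearMap.trace_eq_sum_inner (L.starProjection : E →ₗ[𝕜] E) b
  have re_trace_eq := congrArg RCLike.re trace_eq
  simp only [trace_starProjection_eq_finrank, RCLike.natCast_re, map_sum,
    ContinuousLinearMap.coe_coe, ← L.inner_starProjection_left_eq_right,
    L.re_inner_starProjection_eq_normSq] at re_trace_eq
  exact re_trace_eq.symm

end Projection

theorem finrank_range_toLpLin {m n R : Type*} [Finite m] [Fintype n] [DecidableEq n] [CommRing R]
    (p q : ℝ≥0∞) (A : Matrix m n R) :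
    Module.finrank R (LinearMap.range (Matrix.toLpLin p q A)) = A.rank := by
  rw [Matrix.toLpLin_eq_toLin]
  exact (A.rank_eq_finrank_range_toLin _ _).symm

theorem sum_Icc_one_eq_sum_fin {M : Type*} [AddCommMonoid M] (f : ℕ → M) (n : ℕ) :
    ∑ j ∈ Finset.Icc 1 n, f j = ∑ i : Fin n, f (i + 1) := by
  rw [Fin.sum_univ_eq_sum_range (fun i => f (i + 1)), Finset.range_eq_Ico,
    Finset.sum_Ico_add', zero_add, Finset.Ico_add_one_right_eq_Icc]

theorem mul_div_le_sSup_mul_sSup_div {F g : ℝ → ℝ} (hpos : ∀ s, 0 < s → 0 < F s)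
    (hmono : MonotoneOn F (Set.Ioi 0)) (hgF : ∀ s, 0 < s → g s ≤ F s)
    {σ σ' t : ℝ} (hσ : 0 < σ) (hσσ' : σ ≤ σ') (hσt : σ ≤ t) :
    F σ * (g σ' / F σ') ≤
      sSup ((fun σ => F σ * sSup ((fun σ' => g σ' / F σ') '' Set.Ici σ)) '' Set.Ioc 0 t) := by
  have ratio_le_one {τ : ℝ} (hτ : 0 < τ) :
      ∀ y ∈ (fun τ' => g τ' / F τ') '' Set.Ici τ, y ≤ 1 := by
    rintro _ ⟨τ', hττ', rfl⟩
    have hτ' : 0 < τ' := hτ.trans_le hττ'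
    exact (div_le_one (hpos τ' hτ')).2 (hgF τ' hτ')
  have bddAbove_outer :
      BddAbove ((fun τ => F τ * sSup ((fun τ' => g τ' / F τ') '' Set.Ici τ)) '' Set.Ioc 0 t) := by
    refine ⟨F t, ?_⟩
    rintro _ ⟨τ, ⟨hτ, hτt⟩, rfl⟩
    calc F τ * sSup ((fun τ' => g τ' / F τ') '' Set.Ici τ)
        ≤ F τ := mul_le_of_le_one_right (hpos τ hτ).le
          (csSup_le (Set.nonempty_Ici.image _) (ratio_le_one hτ))
      _ ≤ F t := hmono hτ (hτ.trans_le hτt) hτt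
  calc F σ * (g σ' / F σ')
      ≤ F σ * sSup ((fun τ' => g τ' / F τ') '' Set.Ici σ) :=
        mul_le_mul_of_nonneg_left
          (le_csSup ⟨1, ratio_le_one hσ⟩ (Set.mem_image_of_mem _ hσσ')) (hpos σ hσ).le
    _ ≤ _ := le_csSup bddAbove_outer (Set.mem_image_of_mem _ ⟨hσ, hσt⟩)

theorem projSuppNormSq_eq_norm_sq_starProjection {m : ℕ} (S : Matrix (Fin m) (Fin m) ℝ)
    (x : Fin m → ℝ) :
    projSuppNormSq S x =
      ‖(LinearMap.range (Matrix.toEuclideanLin S)).starProjection (WithLp.toLp 2 x)‖ ^ 2 :=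
  rfl

theorem projSuppNormSq_le_sum_mul_self {m : ℕ} (S : Matrix (Fin m) (Fin m) ℝ) (x : Fin m → ℝ) :
    projSuppNormSq S x ≤ ∑ v, x v * x v := by
  calc projSuppNormSq S x
      ≤ ‖(WithLp.toLp 2 x : EuclideanSpace ℝ (Fin m))‖ ^ 2 := by
        rw [projSuppNormSq_eq_norm_sq_starProjection]
        gcongr
        exact Submodule.norm_starProjection_apply_le _ _
    _ = ∑ v, x v * x v := by
        simp only [EuclideanSpace.real_norm_sq_eq, ← pow_two]

namespace OrthonormalFamily

variable {m : ℕ} {φ : ℕ → Fin m → ℝ}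

theorem orthonormal (hφ : OrthonormalFamily m φ) :
    Orthonormal ℝ fun i : Fin m => (WithLp.toLp 2 (φ (i + 1)) : EuclideanSpace ℝ (Fin m)) := by
  rw [orthonormal_iff_ite]
  intro i j
  have inner_eq := hφ (i + 1) (Finset.mem_Icc.2 ⟨by omega, by omega⟩)
    (j + 1) (Finset.mem_Icc.2 ⟨by omega, by omega⟩)
  simpa [PiLp.inner_apply, mul_comm, Fin.ext_iff] using inner_eq

/-- The orthonormal basis of `ℝ^V` formed by `φ₁, …, φ_m`, with `φ_{i+1}` at the zero-based
index `i : Fin m`. -/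
def orthonormalBasis (hφ : OrthonormalFamily m φ) :
    OrthonormalBasis (Fin m) ℝ (EuclideanSpace ℝ (Fin m)) :=
  OrthonormalBasis.mk hφ.orthonormal
    (hφ.orthonormal.linearIndependent.span_eq_top_of_card_eq_finrank' (by simp)).ge

theorem orthonormalBasis_apply (hφ : OrthonormalFamily m φ) (i : Fin m) :
    hφ.orthonormalBasis i = WithLp.toLp 2 (φ (i + 1)) := by
  simp [orthonormalBasis]

theorem sum_projSuppNormSq_eq_rank (hφ : OrthonormalFamily m φ) (S : Matrix (Fin m) (Fin m) ℝ) :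
    ∑ j ∈ Finset.Icc 1 m, projSuppNormSq S (φ j) = S.rank := by
  simp only [sum_Icc_one_eq_sum_fin, projSuppNormSq_eq_norm_sq_starProjection,
    ← hφ.orthonormalBasis_apply, sum_norm_sq_starProjection_eq_finrank,
    finrank_range_toLpLin]

theorem cohFn_eq_rank (hφ : OrthonormalFamily m φ) (S : Matrix (Fin m) (Fin m) ℝ)
    {lam : ℕ → ℝ} {t : ℝ} (hlam : ∀ j ∈ Finset.Icc 1 m, lam j ≤ t) :
    cohFn lam φ S t = S.rank := by
  rw [cohFn, Finset.filter_true_of_mem hlam, hφ.sum_projSuppNormSq_eq_rank]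

theorem cohFn_le_specFn (hφ : OrthonormalFamily m φ) (S : Matrix (Fin m) (Fin m) ℝ)
    (lam : ℕ → ℝ) (t : ℝ) :
    cohFn lam φ S t ≤ specFn m lam t := by
  have projSuppNormSq_le_one (j : ℕ) (hj : j ∈ Finset.Icc 1 m) : projSuppNormSq S (φ j) ≤ 1 := by
    simpa only [hφ j hj j hj, if_true] using projSuppNormSq_le_sum_mul_self S (φ j)
  rw [cohFn, specFn, Finset.cast_card]
  exact Finset.sum_le_sum fun j hj => projSuppNormSq_le_one j (Finset.mem_of_mem_filter j hj)

end OrthonormalFamily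

theorem cohBar_lower_bound_general {m : ℕ} {lam : ℕ → ℝ} {φ : ℕ → Fin m → ℝ} {Fbar : ℝ → ℝ}
    (S : Matrix (Fin m) (Fin m) ℝ) (hφ : OrthonormalFamily m φ)
    (hlam : ∀ j ∈ Finset.Icc 1 m, lam j ≤ lam m) (hpos : ∀ s, 0 < s → 0 < Fbar s)
    (hmono : MonotoneOn Fbar (Set.Ioi 0)) (hmaj : ∀ s, 0 < s → (specFn m lam s : ℝ) ≤ Fbar s)
    (htop : ∀ s, lam m ≤ s → Fbar s = m) {t : ℝ} (ht : 0 < t) :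
    (S.rank : ℝ) / m * Fbar t ≤ cohBar lam φ Fbar S t ∧
      (S.rank : ℝ) / m * (specFn m lam t : ℝ) ≤ (S.rank : ℝ) / m * Fbar t := by
  refine ⟨?_, mul_le_mul_of_nonneg_left (hmaj t ht) (by positivity)⟩
  have le_top : lam m ≤ max t (lam m) := le_max_right _ _
  have cohFn_le (s : ℝ) (hs : 0 < s) : cohFn lam φ S s ≤ Fbar s :=
    (hφ.cohFn_le_specFn S lam s).trans (hmaj s hs)
  calc (S.rank : ℝ) / m * Fbar t
      = Fbar t * (cohFn lam φ S (max t (lam m)) / Fbar (max t (lam m))) := by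
        rw [hφ.cohFn_eq_rank S fun j hj => (hlam j hj).trans le_top, htop _ le_top, mul_comm]
    _ ≤ cohBar lam φ Fbar S t :=
        mul_div_le_sSup_mul_sSup_div hpos hmono cohFn_le ht (le_max_left _ _) le_rfl

/-- **Lower bound on the regularized coherence function:**
`φ̄(S;λ) ≥ (r/m)·F̄(λ) ≥ (r/m)·F(λ)`. -/
theorem cohBar_lower_bound :
    ∀ (m : ℕ) (lam : ℕ → ℝ) (φ : ℕ → Fin m → ℝ) (Fbar : ℝ → ℝ)
      (S : Matrix (Fin m) (Fin m) ℝ),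
      1 ≤ m →
      OrthonormalFamily m φ →
      (∀ k ∈ Finset.Icc 1 m, 0 ≤ lam k) →
      (∀ k k' : ℕ, 1 ≤ k → k ≤ k' → k' ≤ m → lam k ≤ lam k') →
      -- `F̄` is a nondecreasing positive majorant of `F` with `F̄(t)/t` nonincreasing
      -- and `F̄(t) = m` for `t ≥ λ_m`
      (∀ t : ℝ, 0 < t → 0 < Fbar t) →
      (∀ s t : ℝ, 0 < s → s ≤ t → Fbar s ≤ Fbar t) →
      (∀ t : ℝ, 0 < t → (specFn m lam t : ℝ) ≤ Fbar t) →
      (∀ s t : ℝ, 0 < s → s ≤ t → Fbar t / t ≤ Fbar s / s) →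
      (∀ t : ℝ, lam m ≤ t → Fbar t = m) →
      S.IsSymm → 1 ≤ S.rank →
      ∀ t : ℝ, 0 < t → lam 1 ≤ t →
        (S.rank : ℝ) / m * Fbar t ≤ cohBar lam φ Fbar S t ∧
          (S.rank : ℝ) / m * (specFn m lam t : ℝ) ≤ (S.rank : ℝ) / m * Fbar t := by
  intro m lam φ Fbar S _ hφ _ hlam hpos hmono hmaj _ htop _ _ t ht _
  exact cohBar_lower_bound_general S hφ
    (fun j hj => hlam j m (Finset.mem_Icc.1 hj).1 (Finset.mem_Icc.1 hj).2 le_rfl)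
    hpos (fun s hs u _ hsu => hmono s u hs hsu) hmaj htop ht

end
end

section
/- Covering numbers of balls of low-rank symmetric matrices: For every m ≥ 1, every r ∈ {1,…,m}, every R > 0 and every ε with 0 < ε ≤ 18R, the ε-covering number of the set 𝕊_{r,m}(R) := { S : S is a symmetric m×m real matrix, rank(S) ≤ r, ‖S‖₂ ≤ R } with respect to the Hilbert–Schmidt (Frobenius) distance satisfies N(𝕊_{r,m}(R); ‖·‖₂; ε) ≤ (18R/ε)^{(m+1)·r}. -/
open Finset

noncomputable section

/-!
By the spectral theorem, a Hermitian matrix of rank at most `r` is `U * diagonal d * Uᴴ` with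
`U` an `m × r` matrix satisfying `Uᴴ * U = 1`; moreover `‖U‖ ≤ 1` for the operator norm, and the
Euclidean norm of `d` is the Frobenius norm of the matrix. Since
`‖A * B‖ ≤ ‖A‖ * ‖B‖` with the operator norm on `A` and the Frobenius norm on `A * B` and `B`,
the map `(U, d) ↦ U * diagonal d * Uᴴ` is Lipschitz on products of balls for the operator norm
on `U` and the Euclidean norm on `d`. Hence nets of these two balls, which the volumetric
estimate `(1 + 2 ρ / δ) ^ dim` provides, are mapped to a net of the low-rank matrices.
-/

section Volumetric

open MeasureTheory Metric Module Set
open scoped NNReal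

variable {E : Type*} [NormedAddCommGroup E]

theorem card_le_one_add_div_pow_finrank_of_pairwise_le_dist [NormedSpace ℝ E]
    [FiniteDimensional ℝ E] {s : Finset E} {x : E} {ρ δ : ℝ} (hρ : 0 ≤ ρ) (hδ : 0 < δ)
    (hball : (s : Set E) ⊆ closedBall x ρ)
    (hsep : (s : Set E).Pairwise fun y z ↦ δ ≤ dist y z) :
    (s.card : ℝ) ≤ (1 + 2 * ρ / δ) ^ finrank ℝ E := by
  borelize E
  let μ : Measure E := Measure.addHaar
  have hdisjoint : (s : Set E).PairwiseDisjoint fun y ↦ ball y (δ / 2) := fun y hy z hz hyz ↦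
    ball_disjoint_ball (by linarith [hsep hy hz hyz])
  have hsubset : ⋃ y ∈ s, ball y (δ / 2) ⊆ ball x (ρ + δ / 2) := iUnion₂_subset fun y hy ↦
    ball_subset_ball' (by linarith [mem_closedBall.1 (hball hy)])
  have hμball : 0 < μ.real (ball 0 1) :=
    ENNReal.toReal_pos (measure_ball_pos μ 0 one_pos).ne' measure_ball_lt_top.ne
  have hμ (y : E) {t : ℝ} (ht : 0 < t) :
      μ.real (ball y t) = t ^ finrank ℝ E * μ.real (ball 0 1) := by
    rw [measureReal_def, μ.addHaar_ball_of_pos y ht, ENNReal.toReal_mul,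
      ENNReal.toReal_ofReal (by positivity), measureReal_def]
  have hvolume : s.card * (δ / 2) ^ finrank ℝ E * μ.real (ball 0 1) ≤
      (ρ + δ / 2) ^ finrank ℝ E * μ.real (ball 0 1) := calc
    _ = ∑ y ∈ s, μ.real (ball y (δ / 2)) := by
      simp only [hμ _ (half_pos hδ), sum_const, nsmul_eq_mul, mul_assoc]
    _ = μ.real (⋃ y ∈ s, ball y (δ / 2)) :=
      (measureReal_biUnion_finset hdisjoint fun _ _ ↦ measurableSet_ball).symm
    _ ≤ μ.real (ball x (ρ + δ / 2)) := measureReal_mono hsubset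
    _ = _ := hμ _ (by positivity)
  have hratio : 1 + 2 * ρ / δ = (ρ + δ / 2) / (δ / 2) := by field_simp; ring
  rw [hratio, div_pow, le_div_iff₀ (by positivity)]
  exact le_of_mul_le_mul_right hvolume hμball

theorem packingNumber_closedBall_ne_top {X : Type*} [PseudoMetricSpace X] [ProperSpace X]
    (x : X) (ρ : ℝ) {δ : ℝ≥0} (hδ : δ ≠ 0) : packingNumber δ (closedBall x ρ) ≠ ⊤ := by
  obtain ⟨t, -, ht, hcover⟩ := exists_finite_isCover_of_isCompact (half_pos hδ.bot_lt).ne'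
    (isCompact_closedBall x ρ)
  have hle : packingNumber δ (closedBall x ρ) ≤ t.encard := calc
    _ = packingNumber (2 * (δ / 2)) (closedBall x ρ) := by rw [mul_div_cancel₀ _ two_ne_zero]
    _ ≤ externalCoveringNumber (δ / 2) (closedBall x ρ) :=
      packingNumber_two_mul_le_externalCoveringNumber _ _
    _ ≤ t.encard := hcover.externalCoveringNumber_le_encard
  exact (hle.trans_lt ht.encard_lt_top).ne

theorem exists_finset_cover_closedBall_zero (𝕜 : Type*) [RCLike 𝕜] [NormedSpace 𝕜 E]
    [FiniteDimensional 𝕜 E] {ρ δ : ℝ} (hρ : 0 ≤ ρ) (hδ : 0 < δ) :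
    ∃ s : Finset E, (s.card : ℝ) ≤ (1 + 2 * ρ / δ) ^ (finrank ℝ 𝕜 * finrank 𝕜 E) ∧
      (∀ y ∈ s, ‖y‖ ≤ ρ) ∧ ∀ z : E, ‖z‖ ≤ ρ → ∃ y ∈ s, ‖z - y‖ ≤ δ := by
  let _ : NormedSpace ℝ E := NormedSpace.restrictScalars ℝ 𝕜 E
  have : IsScalarTower ℝ 𝕜 E := RestrictScalars.isScalarTower ℝ 𝕜 E
  have : FiniteDimensional ℝ E := FiniteDimensional.trans ℝ 𝕜 E
  have : ProperSpace E := FiniteDimensional.proper ℝ E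
  lift δ to ℝ≥0 using hδ.le
  have hpack := packingNumber_closedBall_ne_top (0 : E) ρ (NNReal.coe_pos.1 hδ).ne'
  have hfinite : (maximalSeparatedSet δ (closedBall (0 : E) ρ)).Finite :=
    encard_lt_top_iff.1 (by rw [encard_maximalSeparatedSet hpack]; exact hpack.lt_top)
  refine ⟨hfinite.toFinset, ?_, fun y hy ↦ ?_, fun z hz ↦ ?_⟩
  · rw [finrank_mul_finrank]
    refine card_le_one_add_div_pow_finrank_of_pairwise_le_dist (x := 0) hρ hδ ?_ ?_
    · simpa only [hfinite.coe_toFinset] using maximalSeparatedSet_subset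
    · rw [hfinite.coe_toFinset]
      intro y hy z hz hyz
      have hlt : (δ : ENNReal) < edist y z := isSeparated_maximalSeparatedSet hy hz hyz
      rw [edist_nndist, ENNReal.coe_lt_coe] at hlt
      exact_mod_cast hlt.le
  · exact mem_closedBall_zero_iff.1 (maximalSeparatedSet_subset (hfinite.mem_toFinset.1 hy))
  · obtain ⟨y, hy, hzy⟩ := mem_iUnion₂.1 <|
      (isCover_maximalSeparatedSet hpack).subset_iUnion_closedBall (mem_closedBall_zero_iff.2 hz)
    exact ⟨y, hfinite.mem_toFinset.2 hy, mem_closedBall_iff_norm.1 hzy⟩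

end Volumetric

section MatrixNorms

open Matrix

variable {𝕜 l m n κ : Type*} [RCLike 𝕜] [Fintype l] [Fintype m] [Fintype n] [Fintype κ]

section OperatorNorm

open scoped Matrix.Norms.L2Operator

/-- The operator norm of a matrix acting between Euclidean spaces. It is a function rather than a
`Norm` instance so that it can stand next to the Frobenius norm `‖·‖`. -/
def l2OpNorm [DecidableEq n] (A : Matrix m n 𝕜) : ℝ := ‖A‖

variable [DecidableEq n]

theorem l2OpNorm_nonneg (A : Matrix m n 𝕜) : 0 ≤ l2OpNorm A := norm_nonneg A

theorem l2OpNorm_conjTranspose [DecidableEq m] (A : Matrix m n 𝕜) :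
    l2OpNorm Aᴴ = l2OpNorm A := l2_opNorm_conjTranspose A

theorem norm_toLp_mulVec_le_l2OpNorm_mul (A : Matrix m n 𝕜) (v : n → 𝕜) :
    ‖WithLp.toLp 2 (A *ᵥ v)‖ ≤ l2OpNorm A * ‖WithLp.toLp 2 v‖ :=
  l2_opNorm_mulVec A (WithLp.toLp 2 v)

theorem l2OpNorm_le_one_of_conjTranspose_mul_self {U : Matrix m n 𝕜} (hU : Uᴴ * U = 1) :
    l2OpNorm U ≤ 1 := by
  refine (mul_self_le_mul_self_iff (norm_nonneg U) zero_le_one).2 ?_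
  calc ‖U‖ * ‖U‖
      = ‖diagonal fun _ : n ↦ (1 : 𝕜)‖ := by
        rw [← l2_opNorm_conjTranspose_mul_self, hU, diagonal_one]
    _ ≤ 1 := by
        rw [l2_opNorm_diagonal]
        exact (pi_norm_const_le _).trans_eq norm_one
    _ = 1 * 1 := (one_mul 1).symm

theorem exists_finset_cover_l2OpNorm_le_one {δ : ℝ} (hδ : 0 < δ) :
    ∃ s : Finset (Matrix m n 𝕜),
      (s.card : ℝ) ≤
        (1 + 2 / δ) ^ (Module.finrank ℝ 𝕜 * (Fintype.card m * Fintype.card n)) ∧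
      (∀ V ∈ s, l2OpNorm V ≤ 1) ∧
      ∀ U : Matrix m n 𝕜, l2OpNorm U ≤ 1 → ∃ V ∈ s, l2OpNorm (U - V) ≤ δ := by
  have h := exists_finset_cover_closedBall_zero (E := Matrix m n 𝕜) 𝕜 zero_le_one hδ
  rwa [mul_one, Module.finrank_matrix, Module.finrank_self, mul_one] at h

end OperatorNorm

section Frobenius

open scoped Matrix.Norms.Frobenius

theorem frobenius_norm_sq (A : Matrix m n 𝕜) : ‖A‖ ^ 2 = ∑ i, ∑ j, ‖A i j‖ ^ 2 := by
  rw [frobenius_norm_def, ← Real.sqrt_eq_rpow, Real.sq_sqrt (by positivity)]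
  simp only [Real.rpow_two]

theorem frobenius_norm_sq_eq_sum_col (A : Matrix m n 𝕜) :
    ‖A‖ ^ 2 = ∑ j, ‖WithLp.toLp 2 (A.col j)‖ ^ 2 := by
  simp only [frobenius_norm_sq, EuclideanSpace.norm_sq_eq, col_apply]
  exact sum_comm

theorem hsNormSq_le_sq_iff_frobenius_norm_le {d : ℕ} {S : Matrix (Fin d) (Fin d) ℝ} {c : ℝ}
    (hc : 0 ≤ c) : hsNormSq S ≤ c ^ 2 ↔ ‖S‖ ≤ c := by
  rw [← sq_le_sq₀ (norm_nonneg S) hc, frobenius_norm_sq]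
  simp only [hsNormSq, Real.norm_eq_abs, sq_abs]

theorem frobenius_norm_mul_le_l2OpNorm_mul [DecidableEq m] (A : Matrix l m 𝕜)
    (B : Matrix m n 𝕜) : ‖A * B‖ ≤ l2OpNorm A * ‖B‖ := by
  refine le_of_sq_le_sq ?_ (mul_nonneg (l2OpNorm_nonneg A) (norm_nonneg B))
  calc ‖A * B‖ ^ 2
      = ∑ j, ‖WithLp.toLp 2 (A *ᵥ B.col j)‖ ^ 2 := frobenius_norm_sq_eq_sum_col _
    _ ≤ ∑ j, (l2OpNorm A * ‖WithLp.toLp 2 (B.col j)‖) ^ 2 := by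
      gcongr
      exact norm_toLp_mulVec_le_l2OpNorm_mul A _
    _ = (l2OpNorm A * ‖B‖) ^ 2 := by
      simp only [mul_pow, ← mul_sum, frobenius_norm_sq_eq_sum_col]

theorem frobenius_norm_mul_conjTranspose_le_mul_l2OpNorm [DecidableEq m] (A : Matrix l m 𝕜)
    (B : Matrix n m 𝕜) : ‖A * Bᴴ‖ ≤ ‖A‖ * l2OpNorm B := calc
  ‖A * Bᴴ‖ = ‖B * Aᴴ‖ := by
    rw [← frobenius_norm_conjTranspose, conjTranspose_mul, conjTranspose_conjTranspose]
  _ ≤ l2OpNorm B * ‖Aᴴ‖ := frobenius_norm_mul_le_l2OpNorm_mul B Aᴴ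
  _ = ‖A‖ * l2OpNorm B := by rw [frobenius_norm_conjTranspose, mul_comm]

theorem frobenius_norm_mul_mul_conjTranspose_le [DecidableEq m] [DecidableEq κ]
    (A : Matrix l m 𝕜) (D : Matrix m κ 𝕜) (B : Matrix n κ 𝕜) :
    ‖A * D * Bᴴ‖ ≤ l2OpNorm A * ‖D‖ * l2OpNorm B :=
  (frobenius_norm_mul_conjTranspose_le_mul_l2OpNorm _ B).trans <|
    mul_le_mul_of_nonneg_right (frobenius_norm_mul_le_l2OpNorm_mul A D) (l2OpNorm_nonneg B)

theorem frobenius_norm_diagonal_ofReal [DecidableEq κ] (d : EuclideanSpace ℝ κ) :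
    ‖diagonal fun k ↦ (d k : 𝕜)‖ = ‖d‖ := by
  simp only [frobenius_norm_diagonal, EuclideanSpace.norm_eq, RCLike.norm_ofReal,
    Real.norm_eq_abs]

end Frobenius

end MatrixNorms

section LowRankHermitian

open Matrix
open scoped Matrix.Norms.Frobenius

variable {𝕜 n κ : Type*} [RCLike 𝕜] [Fintype κ]

theorem exists_embedding_subset_range [Fintype n] {s : Finset n} (hs : s.card ≤ Fintype.card κ)
    (hκ : Fintype.card κ ≤ Fintype.card n) : ∃ e : κ ↪ n, (s : Set n) ⊆ Set.range e := by
  obtain ⟨t, hst, ht⟩ := exists_superset_card_eq hs hκ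
  have e : κ ≃ t := Fintype.equivOfCardEq (by rw [Fintype.card_coe, ht])
  refine ⟨e.toEmbedding.trans (Function.Embedding.subtype _), fun i hi ↦ ?_⟩
  exact ⟨e.symm ⟨i, hst hi⟩, by simp⟩

/-- The product `U D Uᴴ` with `D` the diagonal matrix with real entries `d`: the form in which
the spectral theorem presents a Hermitian matrix. The vector `d` lies in a Euclidean space so that
its norm is the Frobenius norm of `D`. -/
def conjDiagonal [DecidableEq κ] (U : Matrix n κ 𝕜) (d : EuclideanSpace ℝ κ) : Matrix n n 𝕜 :=
  U * diagonal (fun k ↦ (d k : 𝕜)) * Uᴴ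

variable [Fintype n]

theorem conjDiagonal_submatrix_of_forall_notMem_range [DecidableEq κ] [DecidableEq n]
    (Q : Matrix n n 𝕜) (d : EuclideanSpace ℝ n) (e : κ ↪ n) (hd : ∀ i ∉ Set.range e, d i = 0) :
    conjDiagonal (Q.submatrix id e) (WithLp.toLp 2 (d ∘ e)) = conjDiagonal Q d := by
  ext i j
  rw [conjDiagonal, conjDiagonal, Matrix.mul_apply, Matrix.mul_apply]
  simp only [mul_diagonal, conjTranspose_apply]
  refine sum_of_injOn e e.injective.injOn (fun _ _ ↦ mem_coe.2 (mem_univ _)) ?_ fun _ _ ↦ rfl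
  intro k _ hk
  rw [hd k (by simpa using hk), RCLike.ofReal_zero, mul_zero, zero_mul]

theorem exists_eq_conjDiagonal_of_isHermitian [DecidableEq κ] {S : Matrix n n 𝕜}
    (hS : S.IsHermitian) (hrank : S.rank ≤ Fintype.card κ) (hκ : Fintype.card κ ≤ Fintype.card n) :
    ∃ (U : Matrix n κ 𝕜) (d : EuclideanSpace ℝ κ), Uᴴ * U = 1 ∧ S = conjDiagonal U d := by
  classical
  rw [hS.rank_eq_card_non_zero_eigs, Fintype.card_subtype] at hrank
  obtain ⟨e, he⟩ := exists_embedding_subset_range hrank hκ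
  let Q : Matrix n n 𝕜 := hS.eigenvectorUnitary
  have hQ : Qᴴ * Q = 1 := Unitary.coe_star_mul_self hS.eigenvectorUnitary
  refine ⟨Q.submatrix id e, WithLp.toLp 2 (hS.eigenvalues ∘ e), ?_, ?_⟩
  · rw [conjTranspose_submatrix, ← submatrix_mul _ _ _ _ _ Function.bijective_id, hQ,
      submatrix_one _ e.injective]
  · calc S = conjDiagonal Q (WithLp.toLp 2 hS.eigenvalues) := hS.spectral_theorem
      _ = _ := by
        refine (conjDiagonal_submatrix_of_forall_notMem_range Q _ e fun i hi ↦ ?_).symm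
        by_contra hne
        exact hi (he (by simpa using hne))

theorem norm_le_frobenius_norm_conjDiagonal [DecidableEq κ] {U : Matrix n κ 𝕜}
    (hU : Uᴴ * U = 1) (d : EuclideanSpace ℝ κ) : ‖d‖ ≤ ‖conjDiagonal U d‖ := by
  classical
  have hdiag : diagonal (fun k ↦ (d k : 𝕜)) = Uᴴ * conjDiagonal U d * Uᴴᴴ := by
    rw [conjDiagonal, conjTranspose_conjTranspose, ← Matrix.mul_assoc, ← Matrix.mul_assoc, hU,
      Matrix.one_mul, Matrix.mul_assoc, hU, Matrix.mul_one]
  have hUnorm : l2OpNorm Uᴴ ≤ 1 :=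
    (l2OpNorm_conjTranspose U).trans_le (l2OpNorm_le_one_of_conjTranspose_mul_self hU)
  calc ‖d‖ = ‖Uᴴ * conjDiagonal U d * Uᴴᴴ‖ := by
        rw [← hdiag, frobenius_norm_diagonal_ofReal]
    _ ≤ l2OpNorm Uᴴ * ‖conjDiagonal U d‖ * l2OpNorm Uᴴ :=
      frobenius_norm_mul_mul_conjTranspose_le _ _ _
    _ ≤ 1 * ‖conjDiagonal U d‖ * 1 := by gcongr; exact l2OpNorm_nonneg _
    _ = ‖conjDiagonal U d‖ := by rw [one_mul, mul_one]

theorem frobenius_norm_conjDiagonal_sub_le [DecidableEq κ] {U V : Matrix n κ 𝕜}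
    (hU : l2OpNorm U ≤ 1) (hV : l2OpNorm V ≤ 1) (c d : EuclideanSpace ℝ κ) :
    ‖conjDiagonal U c - conjDiagonal V d‖ ≤ l2OpNorm (U - V) * (‖c‖ + ‖d‖) + ‖c - d‖ := by
  let D (x : EuclideanSpace ℝ κ) : Matrix κ κ 𝕜 := diagonal fun k ↦ (x k : 𝕜)
  have hD (x : EuclideanSpace ℝ κ) : ‖D x‖ = ‖x‖ := frobenius_norm_diagonal_ofReal x
  have hDsub : D (c - d) = D c - D d := by
    simp only [D, PiLp.sub_apply, RCLike.ofReal_sub, diagonal_sub]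
  have htelescope : conjDiagonal U c - conjDiagonal V d =
      (U - V) * D c * Uᴴ + V * D (c - d) * Uᴴ + V * D d * (U - V)ᴴ := by
    rw [hDsub]
    simp only [conjDiagonal, D, conjTranspose_sub, Matrix.sub_mul, Matrix.mul_sub]
    abel
  calc ‖conjDiagonal U c - conjDiagonal V d‖
      ≤ ‖(U - V) * D c * Uᴴ‖ + ‖V * D (c - d) * Uᴴ‖ + ‖V * D d * (U - V)ᴴ‖ := by
        rw [htelescope]
        exact norm_add₃_le
    _ ≤ l2OpNorm (U - V) * ‖c‖ * l2OpNorm U + l2OpNorm V * ‖c - d‖ * l2OpNorm U +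
          l2OpNorm V * ‖d‖ * l2OpNorm (U - V) := by
        simp only [← hD]
        gcongr <;> exact frobenius_norm_mul_mul_conjTranspose_le _ _ _
    _ ≤ l2OpNorm (U - V) * ‖c‖ * 1 + 1 * ‖c - d‖ * 1 + 1 * ‖d‖ * l2OpNorm (U - V) := by
        have hUVnonneg := l2OpNorm_nonneg (U - V)
        have hUnonneg := l2OpNorm_nonneg U
        gcongr
    _ = l2OpNorm (U - V) * (‖c‖ + ‖d‖) + ‖c - d‖ := by ring

theorem exists_finset_cover_isHermitian_rank_le_card
    (hκ : Fintype.card κ ≤ Fintype.card n) {R ε : ℝ} (hR : 0 < R) (hε : 0 < ε) :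
    ∃ net : Finset (Matrix n n 𝕜),
      (net.card : ℝ) ≤
        (1 + 6 * R / ε) ^ ((Module.finrank ℝ 𝕜 * Fintype.card n + 1) * Fintype.card κ) ∧
      ∀ S : Matrix n n 𝕜, S.IsHermitian → S.rank ≤ Fintype.card κ → ‖S‖ ≤ R →
        ∃ T ∈ net, ‖S - T‖ ≤ ε := by
  classical
  obtain ⟨s, hscard, hsnorm, hscover⟩ :=
    exists_finset_cover_l2OpNorm_le_one (𝕜 := 𝕜) (m := n) (n := κ) (δ := ε / (3 * R))
      (by positivity)
  obtain ⟨t, htcard, htnorm, htcover⟩ :=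
    exists_finset_cover_closedBall_zero (E := EuclideanSpace ℝ κ) ℝ hR.le
      (δ := ε / 3) (by positivity)
  refine ⟨image₂ conjDiagonal s t, ?_, fun S hS hrank hSR ↦ ?_⟩
  · have hsbase : 1 + 2 / (ε / (3 * R)) = 1 + 6 * R / ε := by field_simp; ring
    have htbase : 1 + 2 * R / (ε / 3) = 1 + 6 * R / ε := by field_simp; ring
    rw [hsbase] at hscard
    rw [htbase, Module.finrank_self, finrank_euclideanSpace, one_mul] at htcard
    calc ((image₂ conjDiagonal s t).card : ℝ)
        ≤ s.card * t.card := by exact_mod_cast card_image₂_le conjDiagonal s t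
      _ ≤ (1 + 6 * R / ε) ^ (Module.finrank ℝ 𝕜 * (Fintype.card n * Fintype.card κ)) *
            (1 + 6 * R / ε) ^ Fintype.card κ := by gcongr
      _ = _ := by rw [← pow_add]; ring
  · obtain ⟨U, c, hU, rfl⟩ := exists_eq_conjDiagonal_of_isHermitian hS hrank hκ
    have hUnorm := l2OpNorm_le_one_of_conjTranspose_mul_self hU
    have hc : ‖c‖ ≤ R := (norm_le_frobenius_norm_conjDiagonal hU c).trans hSR
    obtain ⟨V, hVs, hUV⟩ := hscover U hUnorm
    obtain ⟨d, hdt, hcd⟩ := htcover c hc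
    refine ⟨conjDiagonal V d, mem_image₂_of_mem hVs hdt, ?_⟩
    calc ‖conjDiagonal U c - conjDiagonal V d‖
        ≤ l2OpNorm (U - V) * (‖c‖ + ‖d‖) + ‖c - d‖ :=
          frobenius_norm_conjDiagonal_sub_le hUnorm (hsnorm V hVs) c d
      _ ≤ ε / (3 * R) * (R + R) + ε / 3 := by gcongr; exact htnorm d hdt
      _ = ε := by field_simp; ring

theorem covering_low_rank_symmetric_general (r : ℕ) {R ε : ℝ} (hε : 0 < ε) (hεR : ε ≤ 18 * R) :
    ∃ net : Finset (Matrix n n 𝕜),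
      (net.card : ℝ) ≤ (18 * R / ε) ^ ((Module.finrank ℝ 𝕜 * Fintype.card n + 1) * r) ∧
      ∀ S : Matrix n n 𝕜, S.IsHermitian → S.rank ≤ r → ‖S‖ ≤ R →
        ∃ T ∈ net, ‖S - T‖ ≤ ε := by
  have hbase : 1 ≤ 18 * R / ε := (one_le_div hε).2 hεR
  obtain hRε | hεR' := le_total R ε
  · refine ⟨{0}, ?_, fun S _ _ hS ↦ ⟨0, mem_singleton_self 0, ?_⟩⟩
    · simpa only [card_singleton, Nat.cast_one] using one_le_pow₀ hbase
    · simpa only [sub_zero] using hS.trans hRε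
  · obtain ⟨net, hcard, hcover⟩ := exists_finset_cover_isHermitian_rank_le_card (𝕜 := 𝕜) (n := n)
      (κ := Fin (min r (Fintype.card n))) (by simp) (hε.trans_le hεR') hε
    simp only [Fintype.card_fin] at hcard hcover
    refine ⟨net, hcard.trans ?_, fun S hS hrank ↦
      hcover S hS (le_min hrank S.rank_le_card_width)⟩
    have hbase_le : 1 + 6 * R / ε ≤ 18 * R / ε := by
      rw [mul_div_assoc, mul_div_assoc]
      linarith [(one_le_div hε).2 hεR']
    have hR : 0 ≤ R := hε.le.trans hεR'
    calc _ ≤ (18 * R / ε) ^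
            ((Module.finrank ℝ 𝕜 * Fintype.card n + 1) * min r (Fintype.card n)) := by gcongr
      _ ≤ _ := pow_le_pow_right₀ hbase (Nat.mul_le_mul_left _ (min_le_left _ _))

end LowRankHermitian

/-- **Covering numbers of balls of low-rank symmetric matrices:** the set
`𝕊_{r,m}(R)` of symmetric `m×m` matrices of rank at most `r` and Hilbert–Schmidt
norm at most `R` admits an `ε`-net of cardinality at most `(18R/ε)^{(m+1)r}`. -/
theorem covering_low_rank_symmetric :
    ∀ (m r : ℕ) (R ε : ℝ),
      1 ≤ m → 1 ≤ r → r ≤ m → 0 < R → 0 < ε → ε ≤ 18 * R →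
      ∃ net : Finset (Matrix (Fin m) (Fin m) ℝ),
        (net.card : ℝ) ≤ (18 * R / ε) ^ ((m + 1) * r) ∧
        ∀ S : Matrix (Fin m) (Fin m) ℝ,
          S.IsSymm → S.rank ≤ r → hsNormSq S ≤ R ^ 2 →
          ∃ T ∈ net, hsNormSq (S - T) ≤ ε ^ 2 := by
  intro m r R ε _ _ _ hR hε hεR
  simpa [hsNormSq_le_sq_iff_frobenius_norm_le, hR.le, hε.le, Matrix.IsHermitian, Matrix.IsSymm]
    using covering_low_rank_symmetric_general (𝕜 := ℝ) (n := Fin m) r hε hεR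

end
end

section
/- Properties of the lower-bound construction kernels: Let l ∈ {2,…,m}, l' := ⌊l/2⌋, l'' := l − l', let r ∈ {1,…,l''} and κ > 0. For σ ∈ {−1,+1}^{l'×r}, define K_σ(u,v) := K'_σ(u,v) + K'_σ(v,u), where K'_σ(u,v) := κ·∑_{i=1}^{l'} ∑_{j=1}^{r} σ_{ij}·φ_i(u)·∑_{k=0}^{⌊l''/r⌋−1} φ_{l'+rk+j}(v). Then: (i) ‖K_σ‖₂² ≤ κ²·l² for every σ; (ii) ‖W^{1/2}K_σ‖₂² ≤ λ_l·‖K_σ‖₂² ≤ λ_l·κ²·l² for every σ; and (iii) for any σ, σ' ∈ {−1,+1}^{l'×r} with ∑_{i=1}^{l'}∑_{j=1}^{r} 1{σ_{ij} ≠ σ'_{ij}} ≥ l'·r/16, one has ‖K_σ − K_{σ'}‖₂² ≥ 4κ²·(l'·r/16)·⌊l''/r⌋ ≥ κ²·l²/64. -/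
open Finset

noncomputable section

/-- The kernel `K_σ(u,v) = K'_σ(u,v) + K'_σ(v,u)` with
`K'_σ(u,v) = κ ∑_{i=1}^{l'} ∑_{j=1}^{r} σ_{ij} φ_i(u) ∑_{k=0}^{⌊l''/r⌋−1} φ_{l'+rk+j}(v)`. -/
def Kconstr {m : ℕ} (l' r q : ℕ) (κ : ℝ) (φ : ℕ → Fin m → ℝ)
    (σ : ℕ → ℕ → ℝ) : Matrix (Fin m) (Fin m) ℝ :=
  Matrix.of fun u v =>
    (κ * ∑ i ∈ Finset.Icc 1 l', ∑ j ∈ Finset.Icc 1 r,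
        σ i j * φ i u * ∑ k ∈ Finset.range q, φ (l' + r * k + j) v) +
      (κ * ∑ i ∈ Finset.Icc 1 l', ∑ j ∈ Finset.Icc 1 r,
        σ i j * φ i v * ∑ k ∈ Finset.range q, φ (l' + r * k + j) u)

/-!
Write `ψ_j = ∑_k φ_{l'+rk+j}`. Then `K_σ = A + Aᵀ` with `A = κ ∑ σ_{ij} φ_i ⊗ ψ_j`. Each of the
families `(φ_i)` and `(ψ_j)` is orthogonal, `‖φ_i‖ = 1` and `‖ψ_j‖² = ⌊l''/r⌋`, so Pythagoras
computes `‖A‖₂²`. The two families are orthogonal to each other, so `A² = 0` and the two summands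
of `K_σ` are orthogonal in the Hilbert–Schmidt sense: `‖K_σ‖₂² = 2κ²⌊l''/r⌋ ∑ σ_{ij}²`. As `K_σ` is
linear in `σ`, this formula also gives (iii), and (ii) holds because `K_σ` kills `φ_k` for `k > l`.
-/

open scoped Matrix

section Tensor

variable {U V ι κ R : Type*} [CommSemiring R]

/-- The tensor `∑_{i ∈ s} ∑_{j ∈ t} c_{ij} f_i ⊗ g_j`, as a matrix; it models the one-sided
kernel `K'_σ`. -/
def tensorSum (s : Finset ι) (t : Finset κ) (c : ι → κ → R) (f : ι → U → R) (g : κ → V → R) :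
    Matrix U V R :=
  ∑ i ∈ s, ∑ j ∈ t, c i j • Matrix.vecMulVec (f i) (g j)

variable {s : Finset ι} {t : Finset κ} (c : ι → κ → R) {f : ι → U → R} {g : κ → V → R}

lemma tensorSum_apply (u : U) (v : V) :
    tensorSum s t c f g u v = ∑ i ∈ s, ∑ j ∈ t, c i j * f i u * g j v := by
  simp [tensorSum, Matrix.sum_apply, Matrix.vecMulVec_apply, mul_assoc]

lemma tensorSum_row (u : U) :
    tensorSum s t c f g u = ∑ j ∈ t, (∑ i ∈ s, c i j * f i u) • g j := by
  ext v
  simp only [tensorSum_apply, Finset.sum_apply, Pi.smul_apply, smul_eq_mul, Finset.sum_mul]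
  exact Finset.sum_comm

lemma transpose_tensorSum :
    (tensorSum s t c f g)ᵀ = tensorSum t s (fun j i => c i j) g f := by
  simp only [tensorSum, Matrix.transpose_sum, Matrix.transpose_smul, Matrix.transpose_vecMulVec]
  exact Finset.sum_comm

lemma tensorSum_mulVec_eq_zero [Fintype V] {x : V → R} (hx : ∀ j ∈ t, g j ⬝ᵥ x = 0) :
    tensorSum s t c f g *ᵥ x = 0 := by
  simp only [tensorSum, Matrix.sum_mulVec, Matrix.smul_mulVec, Matrix.vecMulVec_mulVec]
  refine Finset.sum_eq_zero fun i _ => Finset.sum_eq_zero fun j hj => ?_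
  simp [hx j hj]

lemma tensorSum_mul_self_eq_zero [Fintype U] {g : κ → U → R}
    (hgf : ∀ j ∈ t, ∀ i ∈ s, g j ⬝ᵥ f i = 0) :
    tensorSum s t c f g * tensorSum s t c f g = 0 := by
  have mulVec_left_factor : ∀ i ∈ s, tensorSum s t c f g *ᵥ f i = 0 := fun i hi =>
    tensorSum_mulVec_eq_zero c fun j hj => hgf j hj i hi
  nth_rewrite 2 [tensorSum]
  simp only [Finset.mul_sum, Matrix.mul_smul, Matrix.mul_vecMulVec]
  refine Finset.sum_eq_zero fun i hi => Finset.sum_eq_zero fun j _ => ?_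
  rw [mulVec_left_factor i hi, Matrix.zero_vecMulVec, smul_zero]

lemma dotProduct_self_sum_smul_of_pairwise [Fintype U] (x : ι → R)
    (hf : (s : Set ι).Pairwise fun i j => f i ⬝ᵥ f j = 0) :
    (∑ i ∈ s, x i • f i) ⬝ᵥ (∑ i ∈ s, x i • f i) = ∑ i ∈ s, x i ^ 2 * (f i ⬝ᵥ f i) := by
  simp only [sum_dotProduct, dotProduct_sum, smul_dotProduct, dotProduct_smul, smul_eq_mul]
  refine Finset.sum_congr rfl fun i hi => ?_
  rw [Finset.sum_eq_single_of_mem i hi fun j hj hji => by simp [hf hj hi hji]]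
  ring

end Tensor

section HilbertSchmidt

variable {m : ℕ}

lemma hsNormSq_eq_sum_dotProduct (S : Matrix (Fin m) (Fin m) ℝ) :
    hsNormSq S = ∑ u, S u ⬝ᵥ S u := by
  simp only [hsNormSq, dotProduct, sq]

lemma hsNormSq_eq_trace (S : Matrix (Fin m) (Fin m) ℝ) : hsNormSq S = (S * Sᵀ).trace :=
  hsNormSq_eq_sum_dotProduct S

lemma hsNormSq_add_transpose {A : Matrix (Fin m) (Fin m) ℝ} (hA : A * A = 0) :
    hsNormSq (A + Aᵀ) = 2 * hsNormSq A := by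
  have hAt : Aᵀ * Aᵀ = 0 := by rw [← Matrix.transpose_mul, hA, Matrix.transpose_zero]
  simp only [hsNormSq_eq_trace, Matrix.transpose_add, Matrix.transpose_transpose, add_mul,
    mul_add, hA, hAt, add_zero, zero_add, Matrix.trace_add, Matrix.trace_mul_comm Aᵀ A]
  ring

lemma hsNormSq_tensorSum {ι κ : Type*} {s : Finset ι} {t : Finset κ} (c : ι → κ → ℝ)
    {f : ι → Fin m → ℝ} {g : κ → Fin m → ℝ}
    (hf : (s : Set ι).Pairwise fun i i' => f i ⬝ᵥ f i' = 0)
    (hg : (t : Set κ).Pairwise fun j j' => g j ⬝ᵥ g j' = 0) :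
    hsNormSq (tensorSum s t c f g) =
      ∑ i ∈ s, ∑ j ∈ t, c i j ^ 2 * (f i ⬝ᵥ f i) * (g j ⬝ᵥ g j) := by
  have column_normSq (j : κ) :
      ∑ u, (∑ i ∈ s, c i j * f i u) ^ 2 = ∑ i ∈ s, c i j ^ 2 * (f i ⬝ᵥ f i) := by
    rw [← dotProduct_self_sum_smul_of_pairwise (fun i => c i j) hf]
    simp [dotProduct, Finset.sum_apply, sq]
  calc hsNormSq (tensorSum s t c f g)
      = ∑ u, ∑ j ∈ t, (∑ i ∈ s, c i j * f i u) ^ 2 * (g j ⬝ᵥ g j) := by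
        simp only [hsNormSq_eq_sum_dotProduct, tensorSum_row,
          dotProduct_self_sum_smul_of_pairwise _ hg]
    _ = ∑ j ∈ t, (∑ i ∈ s, c i j ^ 2 * (f i ⬝ᵥ f i)) * (g j ⬝ᵥ g j) := by
        rw [Finset.sum_comm]
        simp only [← Finset.sum_mul, column_normSq]
    _ = ∑ i ∈ s, ∑ j ∈ t, c i j ^ 2 * (f i ⬝ᵥ f i) * (g j ⬝ᵥ g j) := by
        simp only [Finset.sum_mul]
        exact Finset.sum_comm

end HilbertSchmidt

namespace OrthonormalFamily

variable {m : ℕ} {φ : ℕ → Fin m → ℝ}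

lemma dotProduct_eq_ite (h : OrthonormalFamily m φ) {j k : ℕ} (hj : j ∈ Finset.Icc 1 m)
    (hk : k ∈ Finset.Icc 1 m) : φ j ⬝ᵥ φ k = if j = k then 1 else 0 :=
  h j hj k hk

lemma sum_dotProduct_sq (h : OrthonormalFamily m φ) (x : Fin m → ℝ) :
    ∑ k ∈ Finset.Icc 1 m, (x ⬝ᵥ φ k) ^ 2 = x ⬝ᵥ x := by
  let Φ : Matrix (Fin m) (Fin m) ℝ := Matrix.of fun k => φ (k + 1)
  have rows_orthonormal : Φ * Φᵀ = 1 := by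
    ext j k
    have mem_Icc (i : Fin m) : (i + 1 : ℕ) ∈ Finset.Icc 1 m := by
      rw [Finset.mem_Icc]; omega
    refine (h.dotProduct_eq_ite (mem_Icc j) (mem_Icc k)).trans ?_
    simp [Matrix.one_apply, Fin.ext_iff]
  have columns_orthonormal : Φᵀ * Φ = 1 := mul_eq_one_comm.mp rows_orthonormal
  calc ∑ k ∈ Finset.Icc 1 m, (x ⬝ᵥ φ k) ^ 2
      = ∑ k : Fin m, (x ⬝ᵥ φ (k + 1)) ^ 2 := by
        rw [Fin.sum_univ_eq_sum_range fun k => (x ⬝ᵥ φ (k + 1)) ^ 2, Finset.range_eq_Ico,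
          Finset.sum_Ico_add' fun k => (x ⬝ᵥ φ k) ^ 2]
        rfl
    _ = Φ *ᵥ x ⬝ᵥ Φ *ᵥ x := Finset.sum_congr rfl fun k _ => by
        rw [sq, dotProduct_comm]
        rfl
    _ = x ⬝ᵥ x := by
        rw [Matrix.dotProduct_mulVec, Matrix.vecMul_mulVec, columns_orthonormal, Matrix.vecMul_one]

lemma sum_mulVec_sq_eq_hsNormSq (h : OrthonormalFamily m φ) (S : Matrix (Fin m) (Fin m) ℝ) :
    ∑ k ∈ Finset.Icc 1 m, ∑ u, (S *ᵥ φ k) u ^ 2 = hsNormSq S := by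
  rw [Finset.sum_comm, hsNormSq_eq_sum_dotProduct]
  exact Finset.sum_congr rfl fun u _ => h.sum_dotProduct_sq (S u)

lemma sobolevHSSq_le_mul_hsNormSq (h : OrthonormalFamily m φ) {lam : ℕ → ℝ} {Λ : ℝ}
    {S : Matrix (Fin m) (Fin m) ℝ}
    (hlam : ∀ k ∈ Finset.Icc 1 m, S *ᵥ φ k ≠ 0 → lam k ≤ Λ) :
    sobolevHSSq lam φ S ≤ Λ * hsNormSq S := by
  rw [← h.sum_mulVec_sq_eq_hsNormSq, Finset.mul_sum]
  refine Finset.sum_le_sum fun k hk => ?_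
  by_cases hS : S *ᵥ φ k = 0
  · simp [hS]
  · exact mul_le_mul_of_nonneg_right (hlam k hk hS) (by positivity)

end OrthonormalFamily

section Blocks

variable {m l' r q : ℕ} {φ : ℕ → Fin m → ℝ}

/-- The vector `ψ_j = ∑_{k < q} φ_{l'+rk+j}` spread over the `q` blocks of length `r` following
the index `l'`. -/
def blockVec (l' r q : ℕ) (φ : ℕ → Fin m → ℝ) (j : ℕ) : Fin m → ℝ :=
  ∑ k ∈ Finset.range q, φ (l' + r * k + j)

lemma block_index_mem_Ioc {j k : ℕ} (hj : j ∈ Finset.Icc 1 r) (hk : k ∈ Finset.range q) :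
    l' + r * k + j ∈ Finset.Ioc l' (l' + r * q) := by
  rw [Finset.mem_Icc] at hj
  have : r * (k + 1) ≤ r * q := Nat.mul_le_mul_left r (Finset.mem_range.mp hk)
  rw [Finset.mem_Ioc]
  lia

lemma block_index_mem_Icc {j k : ℕ} (hm : l' + r * q ≤ m) (hj : j ∈ Finset.Icc 1 r)
    (hk : k ∈ Finset.range q) : l' + r * k + j ∈ Finset.Icc 1 m := by
  have := block_index_mem_Ioc (l' := l') hj hk
  simp only [Finset.mem_Ioc, Finset.mem_Icc] at this ⊢
  lia

lemma block_index_inj {j j' k k' : ℕ} (hj : j ∈ Finset.Icc 1 r) (hj' : j' ∈ Finset.Icc 1 r) :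
    l' + r * k + j = l' + r * k' + j' ↔ j = j' ∧ k = k' := by
  rw [Finset.mem_Icc] at hj hj'
  refine ⟨fun h => ?_, by rintro ⟨rfl, rfl⟩; rfl⟩
  have hk : k = k' := by
    rcases lt_trichotomy k k' with hlt | heq | hgt
    · have := Nat.mul_le_mul_left r hlt.nat_succ_le
      lia
    · exact heq
    · have := Nat.mul_le_mul_left r hgt.nat_succ_le
      lia
  subst hk
  exact ⟨by omega, rfl⟩

lemma blockVec_dotProduct_eq_zero (h : OrthonormalFamily m φ) (hm : l' + r * q ≤ m) {a j : ℕ}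
    (ha : a ∈ Finset.Icc 1 m) (ha' : a ∉ Finset.Ioc l' (l' + r * q)) (hj : j ∈ Finset.Icc 1 r) :
    blockVec l' r q φ j ⬝ᵥ φ a = 0 := by
  rw [blockVec, sum_dotProduct]
  refine Finset.sum_eq_zero fun k hk => ?_
  have hb := block_index_mem_Ioc (l' := l') hj hk
  rw [h.dotProduct_eq_ite (block_index_mem_Icc hm hj hk) ha, if_neg]
  rintro rfl
  exact ha' hb

lemma blockVec_dotProduct_blockVec (h : OrthonormalFamily m φ) (hm : l' + r * q ≤ m) {j j' : ℕ}
    (hj : j ∈ Finset.Icc 1 r) (hj' : j' ∈ Finset.Icc 1 r) :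
    blockVec l' r q φ j ⬝ᵥ blockVec l' r q φ j' = if j = j' then (q : ℝ) else 0 := by
  calc blockVec l' r q φ j ⬝ᵥ blockVec l' r q φ j'
      = ∑ k ∈ Finset.range q, ∑ k' ∈ Finset.range q, if j = j' ∧ k = k' then (1 : ℝ) else 0 := by
        rw [blockVec, blockVec, sum_dotProduct]
        simp only [dotProduct_sum]
        refine Finset.sum_congr rfl fun k hk => Finset.sum_congr rfl fun k' hk' => ?_
        simp only [h.dotProduct_eq_ite (block_index_mem_Icc hm hj hk)
          (block_index_mem_Icc hm hj' hk'), block_index_inj hj hj']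
    _ = if j = j' then (q : ℝ) else 0 := by
        simp +contextual only [ite_and, Finset.sum_ite_irrel, Finset.sum_ite_eq, if_true,
          Finset.sum_const, Finset.card_range, nsmul_eq_mul, mul_one, mul_zero]

lemma Kconstr_eq_add_transpose (κ : ℝ) (τ : ℕ → ℕ → ℝ) :
    Kconstr l' r q κ φ τ =
      tensorSum (Finset.Icc 1 l') (Finset.Icc 1 r) (fun i j => κ * τ i j) φ (blockVec l' r q φ) +
      (tensorSum (Finset.Icc 1 l') (Finset.Icc 1 r) (fun i j => κ * τ i j) φ
        (blockVec l' r q φ))ᵀ := by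
  ext u v
  simp only [Kconstr, Matrix.of_apply, Matrix.add_apply, Matrix.transpose_apply, tensorSum_apply,
    blockVec, Finset.sum_apply, Finset.mul_sum, mul_assoc]

lemma Kconstr_sub (κ : ℝ) (σ σ' : ℕ → ℕ → ℝ) :
    Kconstr l' r q κ φ σ - Kconstr l' r q κ φ σ' = Kconstr l' r q κ φ (σ - σ') := by
  ext u v
  simp only [Kconstr, Matrix.sub_apply, Matrix.of_apply, Pi.sub_apply, sub_mul,
    Finset.sum_sub_distrib]
  ring

lemma Kconstr_mulVec_eq_zero (h : OrthonormalFamily m φ) (hm : l' + r * q ≤ m) (κ : ℝ)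
    (τ : ℕ → ℕ → ℝ) {b : ℕ} (hb : b ∈ Finset.Ioc (l' + r * q) m) :
    Kconstr l' r q κ φ τ *ᵥ φ b = 0 := by
  rw [Finset.mem_Ioc] at hb
  have hbm : b ∈ Finset.Icc 1 m := Finset.mem_Icc.mpr ⟨by omega, hb.2⟩
  have blocks_orthogonal : ∀ j ∈ Finset.Icc 1 r, blockVec l' r q φ j ⬝ᵥ φ b = 0 := fun j hj =>
    blockVec_dotProduct_eq_zero h hm hbm (by rw [Finset.mem_Ioc]; omega) hj
  have heads_orthogonal : ∀ i ∈ Finset.Icc 1 l', φ i ⬝ᵥ φ b = 0 := fun i hi => by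
    rw [Finset.mem_Icc] at hi
    rw [h.dotProduct_eq_ite (Finset.mem_Icc.mpr (by lia)) hbm, if_neg (by lia)]
  rw [Kconstr_eq_add_transpose, transpose_tensorSum, Matrix.add_mulVec,
    tensorSum_mulVec_eq_zero _ blocks_orthogonal, tensorSum_mulVec_eq_zero _ heads_orthogonal,
    add_zero]

lemma hsNormSq_Kconstr (h : OrthonormalFamily m φ) (hm : l' + r * q ≤ m) (κ : ℝ)
    (τ : ℕ → ℕ → ℝ) :
    hsNormSq (Kconstr l' r q κ φ τ) =
      2 * κ ^ 2 * q * ∑ i ∈ Finset.Icc 1 l', ∑ j ∈ Finset.Icc 1 r, τ i j ^ 2 := by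
  have heads_subset : Finset.Icc 1 l' ⊆ Finset.Icc 1 m := Finset.Icc_subset_Icc_right (by lia)
  have heads_pairwise : (Finset.Icc 1 l' : Set ℕ).Pairwise fun i i' => φ i ⬝ᵥ φ i' = 0 :=
    fun i hi i' hi' hne =>
      (h.dotProduct_eq_ite (heads_subset hi) (heads_subset hi')).trans (if_neg hne)
  have blocks_pairwise : (Finset.Icc 1 r : Set ℕ).Pairwise fun j j' =>
      blockVec l' r q φ j ⬝ᵥ blockVec l' r q φ j' = 0 := fun j hj j' hj' hne =>
    (blockVec_dotProduct_blockVec h hm hj hj').trans (if_neg hne)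
  have blocks_orthogonal_heads : ∀ j ∈ Finset.Icc 1 r, ∀ i ∈ Finset.Icc 1 l',
      blockVec l' r q φ j ⬝ᵥ φ i = 0 := fun j hj i hi =>
    blockVec_dotProduct_eq_zero h hm (heads_subset hi)
      (by rw [Finset.mem_Icc] at hi; rw [Finset.mem_Ioc]; omega) hj
  rw [Kconstr_eq_add_transpose,
    hsNormSq_add_transpose (tensorSum_mul_self_eq_zero _ blocks_orthogonal_heads),
    hsNormSq_tensorSum _ heads_pairwise blocks_pairwise, Finset.mul_sum, Finset.mul_sum]
  refine Finset.sum_congr rfl fun i hi => ?_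
  rw [Finset.mul_sum, Finset.mul_sum]
  refine Finset.sum_congr rfl fun j hj => ?_
  rw [h.dotProduct_eq_ite (heads_subset hi) (heads_subset hi),
    blockVec_dotProduct_blockVec h hm hj hj, if_pos rfl, if_pos rfl]
  ring

lemma sobolevHSSq_Kconstr_le (h : OrthonormalFamily m φ) (hm : l' + r * q ≤ m) (κ : ℝ)
    (τ : ℕ → ℕ → ℝ) {lam : ℕ → ℝ} {Λ : ℝ}
    (hlam : ∀ k ∈ Finset.Icc 1 (l' + r * q), lam k ≤ Λ) :
    sobolevHSSq lam φ (Kconstr l' r q κ φ τ) ≤ Λ * hsNormSq (Kconstr l' r q κ φ τ) := by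
  refine h.sobolevHSSq_le_mul_hsNormSq fun k hk hKφ => hlam k ?_
  rw [Finset.mem_Icc] at hk ⊢
  refine ⟨hk.1, not_lt.mp fun hlt => hKφ ?_⟩
  exact Kconstr_mulVec_eq_zero h hm κ τ (Finset.mem_Ioc.mpr ⟨hlt, hk.2⟩)

end Blocks

section Signs

variable {m l' r q : ℕ} {φ : ℕ → Fin m → ℝ} {σ σ' : ℕ → ℕ → ℝ}

lemma hsNormSq_Kconstr_of_sign (h : OrthonormalFamily m φ) (hm : l' + r * q ≤ m) (κ : ℝ)
    (hσ : ∀ i j, σ i j = 1 ∨ σ i j = -1) :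
    hsNormSq (Kconstr l' r q κ φ σ) = 2 * κ ^ 2 * (l' * r * q : ℕ) := by
  rw [hsNormSq_Kconstr h hm]
  have sq_eq_one (i j : ℕ) : σ i j ^ 2 = 1 := sq_eq_one_iff.mpr (hσ i j)
  simp only [sq_eq_one, Finset.sum_const, Nat.card_Icc, Nat.add_sub_cancel, nsmul_eq_mul, mul_one,
    Nat.cast_mul]
  ring

lemma sq_sub_of_sign {x y : ℝ} (hx : x = 1 ∨ x = -1) (hy : y = 1 ∨ y = -1) :
    (x - y) ^ 2 = if x ≠ y then 4 else 0 := by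
  rcases hx with rfl | rfl <;> rcases hy with rfl | rfl <;> norm_num

lemma hsNormSq_Kconstr_sub_of_sign (h : OrthonormalFamily m φ) (hm : l' + r * q ≤ m) (κ : ℝ)
    (hσ : ∀ i j, σ i j = 1 ∨ σ i j = -1) (hσ' : ∀ i j, σ' i j = 1 ∨ σ' i j = -1) :
    hsNormSq (Kconstr l' r q κ φ σ - Kconstr l' r q κ φ σ') =
      8 * κ ^ 2 * ((Finset.Icc 1 l' ×ˢ Finset.Icc 1 r).filter
        fun p => σ p.1 p.2 ≠ σ' p.1 p.2).card * q := by
  rw [Kconstr_sub, hsNormSq_Kconstr h hm, ← Finset.sum_product']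
  simp only [Pi.sub_apply, fun i j => sq_sub_of_sign (hσ i j) (hσ' i j)]
  rw [← Finset.sum_filter, Finset.sum_const, nsmul_eq_mul]
  ring

end Signs

section Counting

variable {l r : ℕ}

lemma half_add_blocks_le (l r : ℕ) : l / 2 + r * ((l - l / 2) / r) ≤ l := by
  have := Nat.mul_div_le (l - l / 2) r
  omega

lemma two_mul_half_mul_blocks_le_sq (l r : ℕ) :
    2 * (l / 2 * r * ((l - l / 2) / r)) ≤ l ^ 2 :=
  calc 2 * (l / 2 * r * ((l - l / 2) / r))
      = 2 * (l / 2) * (r * ((l - l / 2) / r)) := by ring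
    _ ≤ l * l := Nat.mul_le_mul (Nat.mul_div_le l 2)
        ((Nat.mul_div_le _ _).trans (Nat.sub_le _ _))
    _ = l ^ 2 := (sq l).symm

lemma lt_two_mul_mul_div {n : ℕ} (hr : 1 ≤ r) (hrn : r ≤ n) : n < 2 * (r * (n / r)) := by
  have one_le_div : 1 ≤ n / r := (Nat.one_le_div_iff hr).mpr hrn
  calc n < r * (n / r + 1) := Nat.lt_mul_div_succ n hr
    _ ≤ r * (n / r + n / r) := by gcongr
    _ = 2 * (r * (n / r)) := by ring

lemma sq_le_sixteen_mul_half_mul_blocks (hl : 2 ≤ l) (hr : 1 ≤ r) (hrl : r ≤ l - l / 2) :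
    l ^ 2 ≤ 16 * (l / 2 * r * ((l - l / 2) / r)) := by
  have tail_lt := lt_two_mul_mul_div hr hrl
  calc l ^ 2 = l * l := sq l
    _ ≤ 4 * (l / 2) * (4 * (r * ((l - l / 2) / r))) := Nat.mul_le_mul (by omega) (by omega)
    _ = 16 * (l / 2 * r * ((l - l / 2) / r)) := by ring

end Counting

/-- **Properties of the kernels used in the lower-bound construction.** -/
theorem lower_bound_construction_kernels :
    ∀ (m l r : ℕ) (κ : ℝ) (lam : ℕ → ℝ) (φ : ℕ → Fin m → ℝ) (σ σ' : ℕ → ℕ → ℝ),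
      2 ≤ l → l ≤ m → 1 ≤ r → r ≤ l - l / 2 → 0 < κ →
      OrthonormalFamily m φ →
      (∀ k ∈ Finset.Icc 1 m, 0 ≤ lam k) →
      (∀ k k' : ℕ, 1 ≤ k → k ≤ k' → k' ≤ m → lam k ≤ lam k') →
      (∀ i j : ℕ, σ i j = 1 ∨ σ i j = -1) →
      (∀ i j : ℕ, σ' i j = 1 ∨ σ' i j = -1) →
      -- (i)
      (hsNormSq (Kconstr (l / 2) r ((l - l / 2) / r) κ φ σ) ≤ κ ^ 2 * (l : ℝ) ^ 2) ∧
      -- (ii)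
      (sobolevHSSq lam φ (Kconstr (l / 2) r ((l - l / 2) / r) κ φ σ) ≤
          lam l * hsNormSq (Kconstr (l / 2) r ((l - l / 2) / r) κ φ σ) ∧
        sobolevHSSq lam φ (Kconstr (l / 2) r ((l - l / 2) / r) κ φ σ) ≤
          lam l * κ ^ 2 * (l : ℝ) ^ 2) ∧
      -- (iii)
      (((l / 2 * r : ℕ) : ℝ) / 16 ≤
          (((Finset.Icc 1 (l / 2)) ×ˢ (Finset.Icc 1 r)).filter
            (fun p => σ p.1 p.2 ≠ σ' p.1 p.2)).card →
        4 * κ ^ 2 * (((l / 2 * r : ℕ) : ℝ) / 16) * (((l - l / 2) / r : ℕ) : ℝ) ≤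
            hsNormSq (Kconstr (l / 2) r ((l - l / 2) / r) κ φ σ -
              Kconstr (l / 2) r ((l - l / 2) / r) κ φ σ') ∧
          κ ^ 2 * (l : ℝ) ^ 2 / 64 ≤
            4 * κ ^ 2 * (((l / 2 * r : ℕ) : ℝ) / 16) * (((l - l / 2) / r : ℕ) : ℝ)) := by
  intro m l r κ lam φ σ σ' hl hlm hr hrl _ hφ hlam_nonneg hlam_mono hσ hσ'
  have hm := (half_add_blocks_le l r).trans hlm
  have hs_le : hsNormSq (Kconstr (l / 2) r ((l - l / 2) / r) κ φ σ) ≤ κ ^ 2 * (l : ℝ) ^ 2 := by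
    rw [hsNormSq_Kconstr_of_sign hφ hm κ hσ, mul_comm 2, mul_assoc]
    gcongr
    exact_mod_cast two_mul_half_mul_blocks_le_sq l r
  have sobolev_le := sobolevHSSq_Kconstr_le hφ hm κ σ (lam := lam) (Λ := lam l) fun k hk =>
    hlam_mono k l (Finset.mem_Icc.mp hk).1
      ((Finset.mem_Icc.mp hk).2.trans (half_add_blocks_le l r)) hlm
  refine ⟨hs_le, ⟨sobolev_le, ?_⟩, fun hdist => ⟨?_, ?_⟩⟩
  · rw [mul_assoc]
    exact sobolev_le.trans
      (mul_le_mul_of_nonneg_left hs_le (hlam_nonneg l (Finset.mem_Icc.mpr ⟨by omega, hlm⟩)))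
  · rw [hsNormSq_Kconstr_sub_of_sign hφ hm κ hσ hσ']
    gcongr
    norm_num
  · have count : (l : ℝ) ^ 2 ≤ 16 * (((l / 2 * r : ℕ) : ℝ) * ((l - l / 2) / r : ℕ)) := by
      exact_mod_cast sq_le_sixteen_mul_half_mul_blocks hl hr hrl
    linarith [mul_le_mul_of_nonneg_left count (sq_nonneg κ)]

end
end
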